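/- Let ν be a real number with ν ≥ 1, and let 0 < a < b be two consecutive positive zeroes of J_ν (i.e. J_ν(a) = J_ν(b) = 0 and J_ν(z) ≠ 0 for all z with a < z < b). Then there exists exactly one z in the open interval (a, b) with J_{ν−1}(z) + J_ν(z) = 0. Conversely, if 0 < a < b are two consecutive positive zeroes of z ↦ J_{ν−1}(z) + J_ν(z), then there exists exactly one z in (a, b) with J_ν(z) = 0. -/

import Mathlib

/-- Bessel function of the first kind of real order `ν`, defined via its power series
`J_ν(z) = ∑ₘ (−1)^m / (m! Γ(ν+m+1)) (z/2)^(ν+2m)` (with real-exponent powers). -/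
noncomputable def besselJ (ν z : ℝ) : ℝ :=
  ∑' m : ℕ, ((-1 : ℝ) ^ m / (Nat.factorial m * Real.Gamma (ν + m + 1))) *
    (z / 2) ^ (ν + 2 * (m : ℝ))

/-- `x` (indexed by `k ≥ 1`) enumerates the positive zeroes of `f`: it is strictly
increasing on indices `k ≥ 1`, each `x k` is a positive zero of `f`, and every positive
zero of `f` is some `x k`. -/
def EnumPosZeros (f : ℝ → ℝ) (x : ℕ → ℝ) : Prop :=
  StrictMonoOn x (Set.Ici 1) ∧ (∀ k, 1 ≤ k → 0 < x k ∧ f (x k) = 0) ∧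
    ∀ z : ℝ, 0 < z → f z = 0 → ∃ k, 1 ≤ k ∧ x k = z

/-!
At a zero of `J_ν` the derivative of `J_ν` is `J_{ν-1}`, which has the sign of `w = J_{ν-1} + J_ν`
there; at a zero of `w` the derivative of `w` has the sign opposite to that of `J_ν`. A
differentiable function cannot vanish at both ends of an interval while its derivative is positive
at all of its zeros, so `w` vanishes between any two zeros of `J_ν`, and `J_ν` between any two zeros
of `w`; the latter also makes the zero of `w` between consecutive zeros of `J_ν` unique, and
symmetrically.

The strict signs need that `J_ν` and `J_{ν-1}` have no common positive zero. For large `k`, the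
energy `y ^ k * (J_ν(y) ^ 2 + J_{ν-1}(y) ^ 2)` is nondecreasing by the first-order system relating
`J_ν` and `J_{ν-1}`, and it is positive near `0`.
-/

open Filter Set Topology

section Interlacing

variable {f g : ℝ → ℝ} {a b : ℝ}

lemma pos_of_deriv_pos_of_eq_zero (hab : a < b) (hf : ∀ z ∈ Icc a b, DifferentiableAt ℝ f z)
    (hf' : ∀ z ∈ Icc a b, f z = 0 → 0 < deriv f z) (ha : 0 ≤ f a) : 0 < f b := by
  have hnonneg : ∀ z ∈ Icc a b, 0 ≤ f z := fun z hz ↦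
    image_le_of_deriv_right_lt_deriv_boundary' (f := fun _ ↦ 0) (f' := fun _ ↦ 0) (B' := deriv f)
      continuousOn_const (fun _ _ ↦ hasDerivWithinAt_const _ _ _) ha
      (fun x hx ↦ (hf x hx).continuousAt.continuousWithinAt)
      (fun x hx ↦ (hf x (Ico_subset_Icc_self hx)).hasDerivAt.hasDerivWithinAt)
      (fun x hx h ↦ hf' x (Ico_subset_Icc_self hx) h.symm) hz
  have hb : b ∈ Icc a b := right_mem_Icc.2 hab.le
  refine (hnonneg b hb).lt_of_ne' fun hfb ↦ ?_
  have hsign := (eventually_nhdsWithin_sign_eq_of_deriv_pos (hf' b hb hfb) hfb).filter_mono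
    (nhdsWithin_le_nhds (s := Iio b))
  obtain ⟨y, hy, hya, hyb⟩ := (hsign.and (Ioo_mem_nhdsLT hab)).exists
  rw [sign_neg (sub_neg.2 hyb), sign_eq_neg_one_iff] at hy
  exact hy.not_ge (hnonneg y ⟨hya.le, hyb.le⟩)

lemma exists_zero_mem_Ioo_of_deriv_mul_pos (hab : a < b)
    (hf : ∀ z ∈ Icc a b, DifferentiableAt ℝ f z) (hg : ContinuousOn g (Icc a b))
    (hfg : ∀ z ∈ Icc a b, f z = 0 → 0 < deriv f z * g z) (ha : f a = 0) (hb : f b = 0) :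
    ∃ z ∈ Ioo a b, g z = 0 := by
  by_contra! hne
  have ha_mem : a ∈ Icc a b := left_mem_Icc.2 hab.le
  have hne' : ∀ z ∈ Icc a b, g z ≠ 0 := by
    intro z hz
    rcases eq_endpoints_or_mem_Ioo_of_mem_Icc hz with rfl | rfl | hz'
    · exact right_ne_zero_of_mul (hfg z hz ha).ne'
    · exact right_ne_zero_of_mul (hfg z hz hb).ne'
    · exact hne z hz'
  wlog hga : 0 < g a generalizing f g
  · refine this (f := -f) (g := -g) (fun z hz ↦ (hf z hz).neg) hg.neg (fun z hz h ↦ ?_)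
      (by simpa using ha) (by simpa using hb) (by simpa using hne) (by simpa using hne') ?_
    · simpa [deriv.neg] using hfg z hz (neg_eq_zero.1 h)
    · simpa using (not_lt.1 hga).lt_of_ne (hne' a ha_mem)
  have hg_pos : ∀ z ∈ Icc a b, 0 < g z := by
    intro z hz
    by_contra! hgz
    obtain ⟨c, hc, hgc⟩ :=
      isPreconnected_Icc.intermediate_value hz ha_mem hg ⟨hgz, hga.le⟩
    exact hne' c hc hgc
  have hfb : 0 < f b := pos_of_deriv_pos_of_eq_zero hab hf
    (fun z hz h ↦ pos_of_mul_pos_left (hfg z hz h) (hg_pos z hz).le) ha.ge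
  exact hfb.ne' hb

lemma existsUnique_zero_mem_Ioo_of_deriv_mul_pos_of_deriv_mul_neg (hab : a < b)
    (hf : ∀ z ∈ Icc a b, DifferentiableAt ℝ f z) (hg : ∀ z ∈ Icc a b, DifferentiableAt ℝ g z)
    (hfg : ∀ z ∈ Icc a b, f z = 0 → 0 < deriv f z * g z)
    (hgf : ∀ z ∈ Icc a b, g z = 0 → deriv g z * f z < 0)
    (ha : f a = 0) (hb : f b = 0) (hne : ∀ z ∈ Ioo a b, f z ≠ 0) :
    ∃! z, z ∈ Ioo a b ∧ g z = 0 := by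
  obtain ⟨z, hz, hgz⟩ := exists_zero_mem_Ioo_of_deriv_mul_pos hab hf
    (fun y hy ↦ (hg y hy).continuousAt.continuousWithinAt) hfg ha hb
  have not_lt_of_zeros : ∀ x ∈ Ioo a b, ∀ y ∈ Ioo a b, g x = 0 → g y = 0 → ¬ x < y := by
    intro x hx y hy hgx hgy hxy
    have hsub : Icc x y ⊆ Icc a b := Icc_subset_Icc hx.1.le hy.2.le
    obtain ⟨c, hc, hfc⟩ := exists_zero_mem_Ioo_of_deriv_mul_pos (g := -f) hxy
      (fun w hw ↦ hg w (hsub hw))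
      (fun w hw ↦ (hf w (hsub hw)).continuousAt.neg.continuousWithinAt)
      (fun w hw h ↦ by simpa using hgf w (hsub hw) h) hgx hgy
    exact hne c ⟨hx.1.trans hc.1, hc.2.trans hy.2⟩ (neg_eq_zero.1 hfc)
  refine ⟨z, ⟨hz, hgz⟩, fun y ⟨hy, hgy⟩ ↦ le_antisymm ?_ ?_⟩
  · exact not_lt.1 (not_lt_of_zeros z hz y hy hgz hgy)
  · exact not_lt.1 (not_lt_of_zeros y hy z hz hgy hgz)

end Interlacing

section PowerSeries

variable {𝕜 : Type*} [NontriviallyNormedField 𝕜] [CompleteSpace 𝕜] {c : ℕ → 𝕜} {x : 𝕜}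

lemma summable_mul_pow_of_enorm_lt_radius
    (hx : ‖x‖ₑ < (FormalMultilinearSeries.ofScalars 𝕜 c).radius) :
    Summable fun n ↦ c n * x ^ n := by
  simpa [mul_comm] using
    (FormalMultilinearSeries.ofScalars 𝕜 c).summable (x := x) (by simpa using hx)

lemma hasDerivAt_tsum_mul_pow (hx : ‖x‖ₑ < (FormalMultilinearSeries.ofScalars 𝕜 c).radius) :
    HasDerivAt (fun y ↦ ∑' n, c n * y ^ n) (∑' n : ℕ, (n + 1) * c (n + 1) * x ^ n) x := by
  set p := FormalMultilinearSeries.ofScalars 𝕜 c with hp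
  have hsum : p.sum = fun y ↦ ∑' n, c n * y ^ n := by
    ext y
    simp [hp, FormalMultilinearSeries.sum, mul_comm]
  have hterm (n : ℕ) : p.derivSeries n (fun _ ↦ x) 1 = (n + 1) * c (n + 1) * x ^ n := by
    simp [hp, mul_comm]
  have hsummable : Summable fun n ↦ p.derivSeries n fun _ ↦ x :=
    p.derivSeries.summable (by simpa using hx.trans_le p.radius_le_radius_derivSeries)
  have hderiv : p.derivSeries.sum x 1 = ∑' n : ℕ, (n + 1) * c (n + 1) * x ^ n := by
    simp only [← hterm]
    exact (ContinuousLinearMap.apply 𝕜 𝕜 (1 : 𝕜)).map_tsum hsummable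
  simpa only [hsum, hderiv] using (p.hasFDerivAt_sum hx).hasDerivAt

end PowerSeries

/-- The coefficients `1 / (m! Γ(ν + m + 1))` of the Bessel–Clifford function. At the poles of `Γ`,
where `Real.Gamma` is `0`, the junk value `0⁻¹ = 0` is the correct value of `1 / Γ`. -/
noncomputable def besselCliffordCoeff (ν : ℝ) (m : ℕ) : ℝ :=
  (m.factorial * Real.Gamma (ν + m + 1))⁻¹

/-- The Bessel–Clifford function `C_ν`, the entire factor of the Bessel function:
`J_ν(z) = (z / 2) ^ ν * C_ν(-(z / 2) ^ 2)` for `z > 0`. -/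
noncomputable def besselClifford (ν x : ℝ) : ℝ :=
  ∑' m, besselCliffordCoeff ν m * x ^ m

section BesselClifford

variable (ν x : ℝ) (m : ℕ)

lemma besselCliffordCoeff_sub_one :
    besselCliffordCoeff (ν - 1) m = (ν + m) * besselCliffordCoeff ν m := by
  unfold besselCliffordCoeff
  rw [show ν - 1 + m + 1 = ν + m by ring]
  rcases eq_or_ne (ν + m) 0 with h | h
  · simp [h]
  · rw [Real.Gamma_add_one h]
    field_simp

lemma besselCliffordCoeff_add_one :
    besselCliffordCoeff (ν + 1) m = (m + 1) * besselCliffordCoeff ν (m + 1) := by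
  unfold besselCliffordCoeff
  rw [Nat.factorial_succ, Nat.cast_mul, Nat.cast_succ, show ν + (m + 1) + 1 = ν + 1 + m + 1 by ring]
  field_simp

lemma besselCliffordCoeff_eq_mul_succ :
    besselCliffordCoeff ν m = (ν + m + 1) * (m + 1) * besselCliffordCoeff ν (m + 1) := by
  have h := besselCliffordCoeff_sub_one (ν + 1) m
  rw [add_sub_cancel_right, besselCliffordCoeff_add_one] at h
  linear_combination h

lemma eventually_besselCliffordCoeff_ne_zero :
    ∀ᶠ m in atTop, besselCliffordCoeff ν m ≠ 0 := by
  filter_upwards [tendsto_natCast_atTop_atTop.eventually_gt_atTop (-ν)] with m hm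
  have hΓ : 0 < Real.Gamma (ν + m + 1) := Real.Gamma_pos_of_pos (by linarith)
  unfold besselCliffordCoeff
  positivity

lemma radius_ofScalars_besselCliffordCoeff :
    (FormalMultilinearSeries.ofScalars ℝ (besselCliffordCoeff ν)).radius = ⊤ := by
  have hne := eventually_besselCliffordCoeff_ne_zero ν
  refine FormalMultilinearSeries.ofScalars_radius_eq_top_of_tendsto ℝ _ hne ?_
  have hdenom : Tendsto (fun m : ℕ ↦ (ν + m + 1) * (m + 1)) atTop atTop :=
    (tendsto_atTop_add_const_right _ _
      (tendsto_atTop_add_const_left _ _ tendsto_natCast_atTop_atTop)).atTop_mul_atTop₀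
      (tendsto_atTop_add_const_right _ _ tendsto_natCast_atTop_atTop)
  have hratio : Tendsto (fun m : ℕ ↦ ‖((ν + m + 1) * (m + 1))⁻¹‖) atTop (𝓝 0) := by
    simpa using hdenom.inv_tendsto_atTop.norm
  refine hratio.congr' ?_
  filter_upwards [hne] with m hm
  rw [← norm_div]
  rw [besselCliffordCoeff_eq_mul_succ] at hm
  rw [besselCliffordCoeff_eq_mul_succ ν m, Nat.succ_eq_add_one,
    div_mul_cancel_right₀ (right_ne_zero_of_mul hm)]

lemma hasSum_besselClifford :
    HasSum (fun m ↦ besselCliffordCoeff ν m * x ^ m) (besselClifford ν x) :=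
  (summable_mul_pow_of_enorm_lt_radius (by simp [radius_ofScalars_besselCliffordCoeff])).hasSum

lemma hasDerivAt_besselClifford :
    HasDerivAt (besselClifford ν) (besselClifford (ν + 1) x) x := by
  have h := hasDerivAt_tsum_mul_pow (c := besselCliffordCoeff ν) (x := x)
    (by simp [radius_ofScalars_besselCliffordCoeff])
  simp only [← besselCliffordCoeff_add_one] at h
  exact h

lemma besselClifford_sub_one :
    besselClifford (ν - 1) x = ν * besselClifford ν x + x * besselClifford (ν + 1) x := by
  have hshift : HasSum (fun m : ℕ ↦ m * (besselCliffordCoeff ν m * x ^ m))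
      (x * besselClifford (ν + 1) x) := by
    refine (hasSum_nat_add_iff' 1).1 ?_
    simp only [Finset.sum_range_one, Nat.cast_zero, zero_mul, sub_zero]
    refine ((hasSum_besselClifford (ν + 1) x).mul_left x).congr_fun fun m ↦ ?_
    rw [besselCliffordCoeff_add_one, Nat.cast_succ]
    ring
  refine (hasSum_besselClifford (ν - 1) x).unique ?_
  refine (((hasSum_besselClifford ν x).mul_left ν).add hshift).congr_fun fun m ↦ ?_
  rw [besselCliffordCoeff_sub_one]
  ring

lemma besselClifford_zero : besselClifford ν 0 = (Real.Gamma (ν + 1))⁻¹ := by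
  rw [besselClifford, tsum_eq_single 0 fun m hm ↦ by simp [hm]]
  simp [besselCliffordCoeff]

end BesselClifford

section BesselJ

variable {ν z : ℝ}

lemma besselJ_eq_rpow_mul_besselClifford (hz : 0 < z) :
    besselJ ν z = (z / 2) ^ ν * besselClifford ν (-(z / 2) ^ 2) := by
  rw [besselJ, besselClifford, ← tsum_mul_left]
  refine tsum_congr fun m ↦ ?_
  have hpow : (z / 2) ^ (2 * (m : ℝ)) = ((z / 2) ^ 2) ^ m := by
    rw [← pow_mul, ← Real.rpow_natCast, Nat.cast_mul, Nat.cast_two]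
  rw [Real.rpow_add (half_pos hz), hpow, neg_pow ((z / 2) ^ 2), besselCliffordCoeff]
  ring

lemma hasDerivAt_besselJ (hz : 0 < z) :
    HasDerivAt (besselJ ν) (ν / z * besselJ ν z - besselJ (ν + 1) z) z := by
  have hz2 : 0 < z / 2 := half_pos hz
  have hhalf : HasDerivAt (fun y : ℝ ↦ y / 2) (1 / 2) z := (hasDerivAt_id z).div_const 2
  have hprod := (hhalf.rpow_const (p := ν) (Or.inl hz2.ne')).mul
    ((hasDerivAt_besselClifford ν (-(z / 2) ^ 2)).comp z (hhalf.pow 2).neg)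
  have heq : besselJ ν =ᶠ[𝓝 z] fun y ↦ (y / 2) ^ ν * besselClifford ν (-(y / 2) ^ 2) := by
    filter_upwards [lt_mem_nhds hz] with y hy using besselJ_eq_rpow_mul_besselClifford hy
  refine (hprod.congr_of_eventuallyEq heq).congr_deriv ?_
  rw [besselJ_eq_rpow_mul_besselClifford hz, besselJ_eq_rpow_mul_besselClifford hz,
    Real.rpow_add hz2, Real.rpow_sub hz2, Real.rpow_one]
  simp only [Function.comp_apply, Pi.neg_apply, Pi.pow_apply]
  field_simp
  ring

lemma besselJ_sub_one_add_besselJ_add_one (hz : 0 < z) :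
    besselJ (ν - 1) z + besselJ (ν + 1) z = 2 * ν / z * besselJ ν z := by
  have hz2 : 0 < z / 2 := half_pos hz
  simp only [besselJ_eq_rpow_mul_besselClifford hz, besselClifford_sub_one,
    Real.rpow_add hz2, Real.rpow_sub hz2, Real.rpow_one]
  field_simp
  ring

lemma hasDerivAt_besselJ' (hz : 0 < z) :
    HasDerivAt (besselJ ν) (besselJ (ν - 1) z - ν / z * besselJ ν z) z :=
  (hasDerivAt_besselJ hz).congr_deriv <| by
    linear_combination -besselJ_sub_one_add_besselJ_add_one (ν := ν) hz

lemma hasDerivAt_besselJ_sub_one (hz : 0 < z) :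
    HasDerivAt (besselJ (ν - 1)) ((ν - 1) / z * besselJ (ν - 1) z - besselJ ν z) z := by
  simpa only [sub_add_cancel] using hasDerivAt_besselJ (ν := ν - 1) hz

lemma eventually_besselJ_pos (hν : -1 < ν) : ∀ᶠ z in 𝓝[>] 0, 0 < besselJ ν z := by
  have hcont : ContinuousAt (fun z ↦ besselClifford ν (-(z / 2) ^ 2)) 0 :=
    (hasDerivAt_besselClifford ν _).continuousAt.comp
      (f := fun z : ℝ ↦ -(z / 2) ^ 2) (by fun_prop)
  have hpos : 0 < besselClifford ν (-(0 / 2) ^ 2) := by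
    simpa [besselClifford_zero] using Real.Gamma_pos_of_pos (by linarith : 0 < ν + 1)
  filter_upwards [(hcont.eventually_const_lt hpos).filter_mono nhdsWithin_le_nhds,
    self_mem_nhdsWithin] with z hC (hz : 0 < z)
  rw [besselJ_eq_rpow_mul_besselClifford hz]
  positivity

lemma hasDerivAt_rpow_mul_besselJ_sq_add_sq (k : ℝ) (hz : 0 < z) :
    HasDerivAt (fun y ↦ y ^ k * (besselJ ν y ^ 2 + besselJ (ν - 1) y ^ 2))
      (z ^ (k - 1) * ((k - 2 * ν) * besselJ ν z ^ 2 +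
        (k - (2 - 2 * ν)) * besselJ (ν - 1) z ^ 2)) z := by
  have hsq := ((hasDerivAt_besselJ' (ν := ν) hz).pow 2).add
    ((hasDerivAt_besselJ_sub_one (ν := ν) hz).pow 2)
  refine (((hasDerivAt_id z).rpow_const (p := k) (Or.inl hz.ne')).mul hsq).congr_deriv ?_
  simp only [id, Pi.pow_apply, Pi.add_apply]
  rw [Real.rpow_sub hz, Real.rpow_one]
  field_simp
  ring

lemma monotoneOn_rpow_mul_besselJ_sq_add_sq {k : ℝ} (hk : 2 * ν ≤ k) (hk' : 2 - 2 * ν ≤ k) :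
    MonotoneOn (fun y ↦ y ^ k * (besselJ ν y ^ 2 + besselJ (ν - 1) y ^ 2)) (Ioi 0) := by
  refine monotoneOn_of_hasDerivWithinAt_nonneg (convex_Ioi 0)
    (fun y hy ↦ (hasDerivAt_rpow_mul_besselJ_sq_add_sq k hy).continuousAt.continuousWithinAt)
    (fun y hy ↦ (hasDerivAt_rpow_mul_besselJ_sq_add_sq k
      (interior_subset hy)).hasDerivWithinAt) fun y hy ↦ ?_
  have hy : 0 < y := interior_subset hy
  exact mul_nonneg (by positivity) <| add_nonneg (mul_nonneg (sub_nonneg.2 hk) (sq_nonneg _))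
    (mul_nonneg (sub_nonneg.2 hk') (sq_nonneg _))

lemma besselJ_sub_one_ne_zero (hν : -1 < ν) (hz : 0 < z) (h : besselJ ν z = 0) :
    besselJ (ν - 1) z ≠ 0 := by
  intro h'
  obtain ⟨y, hJy, hy, hyz⟩ := ((eventually_besselJ_pos hν).and (Ioo_mem_nhdsGT hz)).exists
  have hmono := monotoneOn_rpow_mul_besselJ_sq_add_sq
    (le_max_left (2 * ν) (2 - 2 * ν)) (le_max_right _ _) hy hz hyz.le
  simp only [h, h'] at hmono
  have henergy : 0 < y ^ max (2 * ν) (2 - 2 * ν) * (besselJ ν y ^ 2 + besselJ (ν - 1) y ^ 2) := by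
    positivity
  linarith

lemma deriv_besselJ_mul_pos_of_besselJ_eq_zero (hν : -1 < ν) (hz : 0 < z) (h : besselJ ν z = 0) :
    0 < deriv (besselJ ν) z * (besselJ (ν - 1) z + besselJ ν z) := by
  rw [(hasDerivAt_besselJ' hz).deriv, h, mul_zero, sub_zero, add_zero]
  exact mul_self_pos.2 (besselJ_sub_one_ne_zero hν hz h)

lemma deriv_besselJ_add_mul_neg_of_besselJ_add_eq_zero (hν : 1 / 2 ≤ ν) (hz : 0 < z)
    (h : besselJ (ν - 1) z + besselJ ν z = 0) :
    deriv (fun y ↦ besselJ (ν - 1) y + besselJ ν y) z * besselJ ν z < 0 := by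
  have hJ : besselJ (ν - 1) z = -besselJ ν z := eq_neg_of_add_eq_zero_left h
  have hne : besselJ ν z ≠ 0 := fun h0 ↦
    besselJ_sub_one_ne_zero (by linarith) hz h0 (by rw [hJ, h0, neg_zero])
  have hcoeff : 0 ≤ 2 * ν - 1 := by linarith
  calc deriv (fun y ↦ besselJ (ν - 1) y + besselJ ν y) z * besselJ ν z
      = -((2 + (2 * ν - 1) / z) * besselJ ν z ^ 2) := by
        rw [((hasDerivAt_besselJ_sub_one hz).fun_add (hasDerivAt_besselJ' hz)).deriv, hJ]
        ring
    _ < 0 := neg_neg_of_pos (by positivity)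

end BesselJ

theorem stmt9_general (ν : ℝ) (hν : 1 / 2 ≤ ν) :
    (∀ a b : ℝ, 0 < a → a < b → besselJ ν a = 0 → besselJ ν b = 0 →
      (∀ z : ℝ, a < z → z < b → besselJ ν z ≠ 0) →
      ∃! z : ℝ, z ∈ Set.Ioo a b ∧ besselJ (ν - 1) z + besselJ ν z = 0) ∧
    (∀ a b : ℝ, 0 < a → a < b →
      besselJ (ν - 1) a + besselJ ν a = 0 → besselJ (ν - 1) b + besselJ ν b = 0 →
      (∀ z : ℝ, a < z → z < b → besselJ (ν - 1) z + besselJ ν z ≠ 0) →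
      ∃! z : ℝ, z ∈ Set.Ioo a b ∧ besselJ ν z = 0) := by
  have hu : ∀ z, 0 < z → DifferentiableAt ℝ (besselJ ν) z := fun z hz ↦
    (hasDerivAt_besselJ hz).differentiableAt
  have hw : ∀ z, 0 < z → DifferentiableAt ℝ (fun y ↦ besselJ (ν - 1) y + besselJ ν y) z :=
    fun z hz ↦ (hasDerivAt_besselJ hz).differentiableAt.fun_add (hu z hz)
  have hν' : -1 < ν := by linarith
  constructor <;> intro a b h0 hab ha hb hne
  · exact existsUnique_zero_mem_Ioo_of_deriv_mul_pos_of_deriv_mul_neg hab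
      (fun z hz ↦ hu z (h0.trans_le hz.1)) (fun z hz ↦ hw z (h0.trans_le hz.1))
      (fun z hz ↦ deriv_besselJ_mul_pos_of_besselJ_eq_zero hν' (h0.trans_le hz.1))
      (fun z hz ↦ deriv_besselJ_add_mul_neg_of_besselJ_add_eq_zero hν (h0.trans_le hz.1))
      ha hb fun z hz ↦ hne z hz.1 hz.2
  · simpa only [Pi.neg_apply, neg_eq_zero] using
      existsUnique_zero_mem_Ioo_of_deriv_mul_pos_of_deriv_mul_neg (g := -besselJ ν) hab
      (fun z hz ↦ hw z (h0.trans_le hz.1)) (fun z hz ↦ (hu z (h0.trans_le hz.1)).neg)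
      (fun z hz h ↦ by
        simpa using deriv_besselJ_add_mul_neg_of_besselJ_add_eq_zero hν (h0.trans_le hz.1) h)
      (fun z hz h ↦ by
        simpa [deriv.neg] using
          deriv_besselJ_mul_pos_of_besselJ_eq_zero hν' (h0.trans_le hz.1) (neg_eq_zero.1 h))
      ha hb fun z hz ↦ hne z hz.1 hz.2

/-- For `ν ≥ 1`, between two consecutive positive zeroes of `J_ν` there is
exactly one zero of `J_{ν−1} + J_ν`, and conversely. -/
theorem stmt9 (ν : ℝ) (hν : 1 ≤ ν) :
    (∀ a b : ℝ, 0 < a → a < b → besselJ ν a = 0 → besselJ ν b = 0 →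
      (∀ z : ℝ, a < z → z < b → besselJ ν z ≠ 0) →
      ∃! z : ℝ, z ∈ Set.Ioo a b ∧ besselJ (ν - 1) z + besselJ ν z = 0) ∧
    (∀ a b : ℝ, 0 < a → a < b →
      besselJ (ν - 1) a + besselJ ν a = 0 → besselJ (ν - 1) b + besselJ ν b = 0 →
      (∀ z : ℝ, a < z → z < b → besselJ (ν - 1) z + besselJ ν z ≠ 0) →
      ∃! z : ℝ, z ∈ Set.Ioo a b ∧ besselJ ν z = 0) :=
  stmt9_general ν (by linarith)
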